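/- arXiv:2002.11292 — 2 statements merged into one kernel-verified Lean document; each statement's English description precedes it below -/
import Mathlib

section
/- The family γ = (γ_n) is a chain map from the birack chain complex C^{BR}_*(X;ℤ) to C^{BR_U}_*(X;ℤ), i.e. γ_{n−1} ∘ ∂^{BR}_n = ∂^{BR_U}_n ∘ γ_n for every integer n, and each γ_n is an isomorphism of abelian groups, whose inverse r_n is given on generators by r_n(g₁,…,g_n; m₁,…,m_n) = ((m₁+m₂+⋯+m_n, g₁), (m₂+⋯+m_n, g₂), …, (m_n, g_n)). -/
open FreeAbelianGroup
open scoped TensorProduct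

namespace GAlex

variable {G M A : Type*} [Group G] [AddCommGroup M] [DistribMulAction Gᵐᵒᵖ M] [AddCommGroup A]

/-- The right action `m · g` of a group element `g : G` on `m : M`
(coming from the right `ℤ[G]`-module structure on `M`). -/
def ract (m : M) (g : G) : M := MulOpposite.op g • m

variable (φ : G →* G)

/-- The operation `(m,g) ⊳ (n,h) = (mh + n(φ(h) − h), h⁻¹gh)` of the `G`-Alexander biquandle. -/
def under (x y : M × G) : M × G :=
  (ract x.1 y.2 + ract y.1 (φ y.2) - ract y.1 y.2, y.2⁻¹ * x.2 * y.2)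

/-- The operation `(m,g) ⊚ (n,h) = (mφ(h), g)` of the `G`-Alexander biquandle. -/
def overOp (x y : M × G) : M × G := (ract x.1 (φ y.2), x.2)

/-- The face `g_{⟨p⟩}` (delete the `p`-th entry). -/
def dGdel (n : ℕ) (p : Fin (n + 1)) (g : Fin (n + 1) → G) : Fin n → G :=
  fun j => g (p.succAbove j)

/-- The face `g_{⟨⊲p⟩}` (conjugate the first entries by `g p` and delete the `p`-th entry). -/
def dGconj (n : ℕ) (p : Fin (n + 1)) (g : Fin (n + 1) → G) : Fin n → G :=
  fun j => if (j : ℕ) < (p : ℕ) then (g p)⁻¹ * g j.castSucc * g p else g j.succ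

/-- The face `m_{⟨p⟩}` (merge the two entries adjacent to position `p`;
for `p = 0` drop the first entry). -/
def dMmer (n : ℕ) (p : Fin (n + 1)) (m : Fin (n + 1) → M) : Fin n → M :=
  fun j =>
    if (j : ℕ) + 1 < (p : ℕ) then m j.castSucc
    else if (j : ℕ) + 1 = (p : ℕ) then m j.castSucc + m j.succ
    else m j.succ

/-- The face `m_{⟨⊲p⟩}`. -/
def dMconj (n : ℕ) (p : Fin (n + 1)) (g : Fin (n + 1) → G) (m : Fin (n + 1) → M) : Fin n → M :=
  fun j =>
    if (j : ℕ) + 1 < (p : ℕ) then ract (m j.castSucc) (g p)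
    else if (j : ℕ) + 1 = (p : ℕ) then ract (m j.castSucc) (g p) + ract (m j.succ) (φ (g p))
    else ract (m j.succ) (φ (g p))

/-- The boundary map `∂^{BR_U}_{n+1} : C^{BR_U}_{n+1}(X;ℤ) → C^{BR_U}_n(X;ℤ)`
(the boundary `∂^{BR_U}_k` is `0` for `k ≤ 1`, which agrees with this formula at `n = 0`). -/
def dBRU (n : ℕ) :
    FreeAbelianGroup ((Fin (n + 1) → G) × (Fin (n + 1) → M)) →+
      FreeAbelianGroup ((Fin n → G) × (Fin n → M)) :=
  FreeAbelianGroup.lift fun x =>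
    ∑ p : Fin (n + 1),
      (-1 : ℤ) ^ (p : ℕ) •
        (FreeAbelianGroup.of (dGdel n p x.1, dMmer n p x.2) -
          FreeAbelianGroup.of (dGconj n p x.1, dMconj φ n p x.1 x.2))

/-- The birack boundary map `∂^{BR}_{n+1} : C^{BR}_{n+1}(X;ℤ) → C^{BR}_n(X;ℤ)`
for the `G`-Alexander biquandle `X = M × G` (with trivial `X`-set). -/
def dBR (n : ℕ) :
    FreeAbelianGroup (Fin (n + 1) → M × G) →+ FreeAbelianGroup (Fin n → M × G) :=
  FreeAbelianGroup.lift fun x =>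
    ∑ p : Fin (n + 1),
      (-1 : ℤ) ^ (p : ℕ) •
        (FreeAbelianGroup.of (fun j => x (p.succAbove j)) -
          FreeAbelianGroup.of (fun j : Fin n =>
            if (j : ℕ) < (p : ℕ) then under φ (x j.castSucc) (x p)
            else overOp φ (x j.succ) (x p)))

/-- `γ_n((m₁,g₁),…,(m_n,g_n)) = (g₁,…,g_n; m₁−m₂, …, m_{n−1}−m_n, m_n)`. -/
def gammaMap (n : ℕ) :
    FreeAbelianGroup (Fin n → M × G) →+ FreeAbelianGroup ((Fin n → G) × (Fin n → M)) :=
  FreeAbelianGroup.lift fun x =>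
    FreeAbelianGroup.of
      (fun j => (x j).2,
       fun j => (x j).1 - if h : (j : ℕ) + 1 < n then (x ⟨(j : ℕ) + 1, h⟩).1 else 0)

/-- `r_n(g₁,…,g_n; m₁,…,m_n) = ((m₁+⋯+m_n, g₁), (m₂+⋯+m_n, g₂), …, (m_n, g_n))`. -/
def rMap (n : ℕ) :
    FreeAbelianGroup ((Fin n → G) × (Fin n → M)) →+ FreeAbelianGroup (Fin n → M × G) :=
  FreeAbelianGroup.lift fun p =>
    FreeAbelianGroup.of fun j => ((∑ i ∈ Finset.Ici j, p.2 i), p.1 j)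

/-- The boundary map `∂^{BR_U}_{d+1}` of `C^{BR_U}_*(X;ℤ)_X` (the version with `X`-set `X`,
whose degree-`d` chain group is free on `(1+d)`-tuples); it is `0` in degrees `≤ 1`. -/
def dBRUX : (d : ℕ) →
    FreeAbelianGroup ((Fin (d + 2) → G) × (Fin (d + 2) → M)) →+
      FreeAbelianGroup ((Fin (d + 1) → G) × (Fin (d + 1) → M))
  | 0 => 0
  | d + 1 =>
    FreeAbelianGroup.lift fun x =>
      ∑ i : Fin (d + 2),
        (-1 : ℤ) ^ (i : ℕ) •
          (FreeAbelianGroup.of (dGdel (d + 2) i.succ x.1, dMmer (d + 2) i.succ x.2) -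
            FreeAbelianGroup.of (dGconj (d + 2) i.succ x.1, dMconj φ (d + 2) i.succ x.1 x.2))

/-- The boundary map `∂^{BR}_{d+1}` of `C^{BR}_*(X;ℤ)_X` (the version with `X`-set `X`);
it is `0` in degrees `≤ 1`. -/
def dBRX : (d : ℕ) →
    FreeAbelianGroup (Fin (d + 2) → M × G) →+ FreeAbelianGroup (Fin (d + 1) → M × G)
  | 0 => 0
  | d + 1 =>
    FreeAbelianGroup.lift fun x =>
      ∑ i : Fin (d + 2),
        (-1 : ℤ) ^ (i : ℕ) •
          (FreeAbelianGroup.of (fun j => x (i.succ.succAbove j)) -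
            FreeAbelianGroup.of (fun j : Fin (d + 2) =>
              if (j : ℕ) < (i : ℕ) + 1 then under φ (x j.castSucc) (x i.succ)
              else overOp φ (x j.succ) (x i.succ)))


lemma ract_add (m n : M) (g : G) : ract (m + n) g = ract m g + ract n g := smul_add _ _ _

lemma ract_sub (m n : M) (g : G) : ract (m - n) g = ract m g - ract n g := smul_sub _ _ _

lemma ract_zero (g : G) : ract (0 : M) g = 0 := smul_zero _

lemma tail_sum_step (n : ℕ) (f : Fin n → M) (j : Fin n) :
    (∑ i ∈ Finset.Ici j, f i) =
      f j + if h : (j : ℕ) + 1 < n then ∑ i ∈ Finset.Ici (⟨(j : ℕ) + 1, h⟩ : Fin n), f i else 0 := by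
  classical
  have h1 : Finset.Ici j = insert j (Finset.Ioi j) := by
    ext i; simp [le_iff_eq_or_lt, eq_comm]
  rw [h1, Finset.sum_insert (by simp)]
  congr 1
  split_ifs with h
  · apply Finset.sum_congr _ (fun _ _ => rfl)
    ext i
    simp only [Finset.mem_Ioi, Finset.mem_Ici, Fin.lt_def, Fin.le_def]
    omega
  · apply Finset.sum_eq_zero
    intro i hi
    simp only [Finset.mem_Ioi, Fin.lt_def] at hi
    omega

lemma tail_sum_unique (n : ℕ) (f a : Fin n → M)
    (h : ∀ j : Fin n, f j = a j - if h : (j : ℕ) + 1 < n then a ⟨(j : ℕ) + 1, h⟩ else 0) :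
    ∀ (k : ℕ) (j : Fin n), n - (j : ℕ) = k → (∑ i ∈ Finset.Ici j, f i) = a j := by
  intro k
  induction k with
  | zero => intro j hj; omega
  | succ k ih =>
    intro j hj
    rw [tail_sum_step, h j]
    split_ifs with h'
    · rw [ih ⟨(j : ℕ) + 1, h'⟩ (by simp only []; omega)]; abel
    · abel

lemma mer_eq (n : ℕ) (p : Fin (n + 1)) (x : Fin (n + 1) → M) :
    (fun j : Fin n => x (p.succAbove j) -
      if h : (j : ℕ) + 1 < n then x (p.succAbove ⟨(j : ℕ) + 1, h⟩) else 0) =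
    dMmer n p (fun j => x j - if h : (j : ℕ) + 1 < n + 1 then x ⟨(j : ℕ) + 1, h⟩ else 0) := by
  funext j
  obtain ⟨j, hj⟩ := j
  obtain ⟨p, hp⟩ := p
  simp only [dMmer, Fin.succAbove, Fin.lt_def, Fin.castSucc_mk, Fin.succ_mk]
  rcases lt_trichotomy (j + 1) p with h | h | h
  · have h1 : j < p := by omega
    have h2 : j + 1 < n := by omega
    have h3 : j < n := by omega
    simp [h, h1, h2, h3]
  · subst h
    by_cases h2 : j + 1 < n <;> simp [h2, hj]
  · have h1 : ¬ j < p := by omega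
    have h3 : ¬ j + 1 < p := by omega
    have h4 : ¬ j + 1 = p := by omega
    by_cases h2 : j + 1 < n <;> simp [h1, h2, h3, h4]

lemma conj_eq (n : ℕ) (p : Fin (n + 1)) (x : Fin (n + 1) → M × G) :
    (fun j : Fin n =>
      (if (j : ℕ) < (p : ℕ) then under φ (x j.castSucc) (x p)
            else overOp φ (x j.succ) (x p)).1 -
      if h : (j : ℕ) + 1 < n then
        (if (j : ℕ) + 1 < (p : ℕ) then under φ (x (Fin.castSucc ⟨(j : ℕ) + 1, h⟩)) (x p)
            else overOp φ (x (Fin.succ ⟨(j : ℕ) + 1, h⟩)) (x p)).1 else 0) =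
    dMconj φ n p (fun j => (x j).2)
      (fun j => (x j).1 - if h : (j : ℕ) + 1 < n + 1 then (x ⟨(j : ℕ) + 1, h⟩).1 else 0) := by
  funext j
  obtain ⟨j, hj⟩ := j
  obtain ⟨p, hp⟩ := p
  simp only [dMconj, Fin.castSucc_mk, Fin.succ_mk]
  rcases lt_trichotomy (j + 1) p with h | h | h
  · have h1 : j < p := by omega
    have h2 : j + 1 < n := by omega
    have h3 : j < n := by omega
    simp [h, h1, h2, h3, under, ract_sub]
  · subst h
    by_cases h2 : j + 1 < n
    · simp [h2, hj, under, overOp, ract_sub]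
      abel
    · simp [h2, hj, under, ract_sub]
      abel
  · have h1 : ¬ j < p := by omega
    have h3 : ¬ j + 1 < p := by omega
    have h4 : ¬ j + 1 = p := by omega
    by_cases h2 : j + 1 < n <;> simp [h1, h2, h3, h4, overOp, ract_sub]

/-- `γ = (γ_n)` is a chain map `C^{BR}_*(X;ℤ) → C^{BR_U}_*(X;ℤ)` and each
`γ_n` is an isomorphism of abelian groups with inverse `r_n` given on generators by
`r_n(g₁,…,g_n; m₁,…,m_n) = ((m₁+⋯+m_n, g₁), …, (m_n, g_n))`. -/
theorem gamma_chainMap_and_gamma_iso (hφ : ∀ g : G, φ g ∈ Subgroup.center G) :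
    (∀ n : ℕ,
        (gammaMap (G := G) (M := M) n).comp (dBR φ n) =
          (dBRU (M := M) φ n).comp (gammaMap (n + 1))) ∧
      (∀ n : ℕ,
        (rMap (G := G) (M := M) n).comp (gammaMap n) =
            AddMonoidHom.id (FreeAbelianGroup (Fin n → M × G)) ∧
          (gammaMap (G := G) (M := M) n).comp (rMap n) =
            AddMonoidHom.id (FreeAbelianGroup ((Fin n → G) × (Fin n → M)))) := by
  refine ⟨fun n => ?_, fun n => ⟨?_, ?_⟩⟩
  · ext x
    simp only [AddMonoidHom.comp_apply, dBR, dBRU, gammaMap, FreeAbelianGroup.lift_apply_of,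
      map_sum, map_zsmul, map_sub]
    refine Finset.sum_congr rfl fun p _ => ?_
    congr 2
    · congr 2
      exact mer_eq n p (fun j => (x j).1)
    · congr 2
      · funext j
        simp only [dGconj]
        split_ifs <;> rfl
      · exact conj_eq φ n p x
  · ext x
    simp only [AddMonoidHom.comp_apply, gammaMap, rMap, FreeAbelianGroup.lift_apply_of,
      AddMonoidHom.id_apply]
    congr 1
    funext j
    exact Prod.ext (tail_sum_unique n _ (fun j => (x j).1) (fun _ => rfl) _ j rfl) rfl
  · ext x
    simp only [AddMonoidHom.comp_apply, gammaMap, rMap, FreeAbelianGroup.lift_apply_of,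
      AddMonoidHom.id_apply]
    congr 1
    refine Prod.ext rfl ?_
    funext j
    simp only []
    rw [tail_sum_step]
    simp

end GAlex
end

section
/- Let f : M³ → A be a G-invariant A-multilinear map. Then the birack 2-cocycle Φ_f := f ∘ ψ₂ ∘ γ₂ : C^{BR}_2(X;ℤ)_X → A of the G-Alexander biquandle X with X-set X satisfies Φ_f((m₀,g₀),(m₁,g₁),(m₂,g₂)) = f((m₀−m₁) − (m₀−m₁)·(φ(g₁)⁻¹g₁), m₁ − m₂, m₂ − m₂·(φ(g₂)g₂⁻¹)) for all m₀,m₁,m₂ ∈ M and g₀,g₁,g₂ ∈ G. -/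
open FreeAbelianGroup
open scoped TensorProduct

namespace GAlex

variable {G M A : Type*} [Group G] [AddCommGroup M] [DistribMulAction Gᵐᵒᵖ M] [AddCommGroup A]

variable (φ : G →* G)

/-- The subgroup of `G`-coinvariants relations in `C^{gp}_n(M;ℤ)`:
generated by all `(m₁g,…,m_ng) − (m₁,…,m_n)`. -/
def coinvSub (n : ℕ) : AddSubgroup (FreeAbelianGroup (Fin n → M)) :=
  AddSubgroup.closure
    {z | ∃ (m : Fin n → M) (g : G),
        z = FreeAbelianGroup.of (fun i => ract (m i) g) - FreeAbelianGroup.of m}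

/-- The coinvariant group chain group `C^{gp}_n(M;ℤ)_G`. -/
abbrev CgpG (n : ℕ) : Type _ :=
  FreeAbelianGroup (Fin n → M) ⧸ coinvSub (G := G) (M := M) n

/-- The group-homology boundary map `∂^{gp}_{n+1} : C^{gp}_{n+1}(M;ℤ) → C^{gp}_n(M;ℤ)`
(it is `0` in degrees `≤ 1`, which agrees with this formula at `n = 0`). -/
def dgp (n : ℕ) :
    FreeAbelianGroup (Fin (n + 1) → M) →+ FreeAbelianGroup (Fin n → M) :=
  FreeAbelianGroup.lift fun m =>
    (∑ p : Fin (n + 1), (-1 : ℤ) ^ (p : ℕ) • FreeAbelianGroup.of (dMmer n p m)) +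
      (-1 : ℤ) ^ (n + 1) • FreeAbelianGroup.of fun j : Fin n => m j.castSucc

/-- `|k| = k₁ + ⋯ + k_n`. -/
def wt {n : ℕ} (k : Fin n → Bool) : ℕ := ∑ i, if k i then 1 else 0

/-- `g_{k,i} = φ(g₀^{k₀} ⋯ g_i^{k_i}) · g_{i+1}^{k_{i+1}} ⋯ g_{n-1}^{k_{n-1}}`
(indices written `0`-based; the products are ordered). -/
def gki {n : ℕ} (g : Fin n → G) (k : Fin n → Bool) (i : Fin n) : G :=
  φ ((((List.finRange n).filter fun j => decide (j ≤ i)).map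
        fun j => if k j then g j else 1).prod) *
    (((List.finRange n).filter fun j => decide (i < j)).map
        fun j => if k j then g j else 1).prod

/-- The value of `ψ` on a generator:
`Σ_{k, k₀ = 0} (−1)^{|k|} (m₀ g_{k,0}, …, m_n g_{k,n})`, as an element of the free
abelian group (before passing to coinvariants). -/
def psiVal (n : ℕ) (x : (Fin (n + 1) → G) × (Fin (n + 1) → M)) :
    FreeAbelianGroup (Fin (n + 1) → M) :=
  ∑ k ∈ Finset.univ.filter fun k : Fin (n + 1) → Bool => k 0 = false,
    (-1 : ℤ) ^ wt k • FreeAbelianGroup.of fun i => ract (x.2 i) (gki φ x.1 k i)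

/-- `ψ` as a homomorphism into the free abelian group (before coinvariants). -/
def psiFree (n : ℕ) :
    FreeAbelianGroup ((Fin (n + 1) → G) × (Fin (n + 1) → M)) →+
      FreeAbelianGroup (Fin (n + 1) → M) :=
  FreeAbelianGroup.lift (psiVal φ n)

/-- The homomorphism `ψ : C^{BR_U} → C^{gp}(M;ℤ)_G`. -/
def psiG (n : ℕ) :
    FreeAbelianGroup ((Fin (n + 1) → G) × (Fin (n + 1) → M)) →+
      CgpG (G := G) (M := M) (n + 1) :=
  (QuotientAddGroup.mk' (coinvSub (G := G) (M := M) (n + 1))).comp (psiFree φ n)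

/-- The homomorphism `ψ_{•,λ}`, sending a generator `x` to `ψ(x) ⊗ λ(x₁)` where `x₁` is the
first `G`-entry of `x`. -/
noncomputable def psiLam (lam : G → A) (n : ℕ) :
    FreeAbelianGroup ((Fin (n + 1) → G) × (Fin (n + 1) → M)) →+
      TensorProduct ℤ (CgpG (G := G) (M := M) (n + 1)) A :=
  FreeAbelianGroup.lift fun x =>
    (QuotientAddGroup.mk' (coinvSub (G := G) (M := M) (n + 1)) (psiVal φ n x)) ⊗ₜ[ℤ]
      lam (x.1 0)

/-- `D^{gp}_n(M;ℤ)_G`: the image in the coinvariants of the subgroup generated by tuples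
with a vanishing entry in a position `1 ≤ i ≤ n−1`. -/
def DgpGsub (n : ℕ) : AddSubgroup (CgpG (G := G) (M := M) n) :=
  (AddSubgroup.closure
      {z : FreeAbelianGroup (Fin n → M) |
        ∃ (m : Fin n → M) (i : Fin n),
          (i : ℕ) + 1 < n ∧ m i = 0 ∧ z = FreeAbelianGroup.of m}).map
    (QuotientAddGroup.mk' (coinvSub (G := G) (M := M) n))

theorem ract_ract_aux (m : M) (g h : G) : ract (ract m g) h = ract m (g * h) := by
  simp [ract, mul_smul]

theorem ract_one_aux (m : M) : ract m (1 : G) = m := by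
  simp [ract]

theorem filter_aux :
    (Finset.univ.filter fun k : Fin (2 + 1) → Bool => k 0 = false) =
      {![false, false, false], ![false, true, false], ![false, false, true],
        ![false, true, true]} := by
  decide

theorem sum_aux {B : Type*} [AddCommGroup B] (F : (Fin (2 + 1) → Bool) → B) :
    (∑ k ∈ Finset.univ.filter fun k : Fin (2 + 1) → Bool => k 0 = false, F k) =
      F ![false, false, false] + F ![false, true, false] + F ![false, false, true] +
        F ![false, true, true] := by
  rw [filter_aux, Finset.sum_insert (by decide), Finset.sum_insert (by decide),
    Finset.sum_insert (by decide), Finset.sum_singleton]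
  abel

theorem finRange_aux : List.finRange (2 + 1) = [0, 1, 2] := by decide

/-- For a `G`-invariant `A`-multilinear map `f : M³ → A`, the birack
`2`-cocycle `Φ_f = f ∘ ψ₂ ∘ γ₂ : C^{BR}_2(X;ℤ)_X → A` (with `X`-set `X`) satisfies
`Φ_f((m₀,g₀),(m₁,g₁),(m₂,g₂)) =
  f((m₀−m₁) − (m₀−m₁)·(φ(g₁)⁻¹g₁), m₁ − m₂, m₂ − m₂·(φ(g₂)g₂⁻¹))`. -/
theorem birackX_two_cocycle_formula (hφ : ∀ g : G, φ g ∈ Subgroup.center G)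
    (f : M → M → M → A)
    (hf₁ : ∀ m m' n p : M, f (m + m') n p = f m n p + f m' n p)
    (hf₂ : ∀ m n n' p : M, f m (n + n') p = f m n p + f m n' p)
    (hf₃ : ∀ m n p p' : M, f m n (p + p') = f m n p + f m n p')
    (hfG : ∀ (m n p : M) (g : G), f (ract m g) (ract n g) (ract p g) = f m n p) :
    ∀ (m₀ m₁ m₂ : M) (g₀ g₁ g₂ : G),
      FreeAbelianGroup.lift (fun v : Fin 3 → M => f (v 0) (v 1) (v 2))
          (psiFree φ 2
            (gammaMap 3 (FreeAbelianGroup.of ![(m₀, g₀), (m₁, g₁), (m₂, g₂)]))) =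
        f ((m₀ - m₁) - ract (m₀ - m₁) ((φ g₁)⁻¹ * g₁)) (m₁ - m₂)
          (m₂ - ract m₂ (φ g₂ * g₂⁻¹)) := by
  intro m₀ m₁ m₂ g₀ g₁ g₂
  have hs₁ : ∀ m m' n p : M, f (m - m') n p = f m n p - f m' n p := by
    intro m m' n p
    rw [eq_sub_iff_add_eq, ← hf₁, sub_add_cancel]
  have hs₃ : ∀ m n p p' : M, f m n (p - p') = f m n p - f m n p' := by
    intro m n p p'
    rw [eq_sub_iff_add_eq, ← hf₃, sub_add_cancel]
  have hc : ∀ g h : G, h * φ g = φ g * h := fun g h => Subgroup.mem_center_iff.1 (hφ g) h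
  have e1 : ∀ a b c : M, f (ract a ((φ g₁)⁻¹ * g₁)) b c =
      f (ract a g₁) (ract b (φ g₁)) (ract c (φ g₁)) := by
    intro a b c
    rw [← hfG _ _ _ (φ g₁), ract_ract_aux, mul_assoc, hc, inv_mul_cancel_left]
  have e2 : ∀ a b c : M, f a b (ract c (φ g₂ * g₂⁻¹)) =
      f (ract a g₂) (ract b g₂) (ract c (φ g₂)) := by
    intro a b c
    rw [← hfG _ _ _ g₂, ract_ract_aux, inv_mul_cancel_right]
  have e3 : ∀ a b c : M, f (ract a ((φ g₁)⁻¹ * g₁)) b (ract c (φ g₂ * g₂⁻¹)) =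
      f (ract a (g₁ * g₂)) (ract b (φ g₁ * g₂)) (ract c (φ g₁ * φ g₂)) := by
    intro a b c
    rw [e1, ← hfG _ _ _ g₂]
    simp only [ract_ract_aux]
    rw [hc g₁, mul_assoc, mul_assoc, inv_mul_cancel, mul_one]
  rw [hs₁, hs₃, hs₃, e1, e2, e3]
  simp only [gammaMap, psiFree, FreeAbelianGroup.lift_apply_of, psiVal, sum_aux, map_add,
    map_zsmul]
  have w0 : wt ![false, false, false] = 0 := by decide
  have w1 : wt ![false, true, false] = 1 := by decide
  have w2 : wt ![false, false, true] = 1 := by decide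
  have w3 : wt ![false, true, true] = 2 := by decide
  rw [w0, w1, w2, w3]
  simp [gki, finRange_aux, ract_one_aux]
  abel

end GAlex
end
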